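/- Let (K, φ) be a topological dynamical system and let q : K → L be a projection onto its maximal trivial factor. Then the Koopman operator T_φ is mean ergodic on C(K) if and only if the pushforward map μ ↦ q_*μ from the space M_φ(K) of φ-invariant regular complex Borel measures on K to the space M(L) of all regular complex Borel measures on L is a linear bijection. -/

import Mathlib

open MeasureTheory Filter

/-- The Koopman operator of `φ` is mean ergodic on `C(K)`: for every continuous function
`f`, the Cesàro averages `A_n f = (1/n) ∑_{k<n} f ∘ φ^k` converge in the sup norm
(i.e. uniformly) to some function. -/
def MeanErgodic {K : Type*} [TopologicalSpace K] (φ : K → K) : Prop :=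
  ∀ f : C(K, ℂ), ∃ g : K → ℂ,
    TendstoUniformly (fun (n : ℕ) (x : K) => (n : ℂ)⁻¹ • ∑ k ∈ Finset.range n, f (φ^[k] x))
      g atTop

/-- A complex Borel measure is regular if the total variations of its real and imaginary
parts are regular measures. -/
def IsRegularComplexMeasure {α : Type*} [MeasurableSpace α] [TopologicalSpace α]
    (μ : ComplexMeasure α) : Prop :=
  (ComplexMeasure.re μ).totalVariation.Regular ∧ (ComplexMeasure.im μ).totalVariation.Regular

set_option linter.unusedSectionVars false

section aux
variable {X : Type*} [TopologicalSpace X] [CompactSpace X] [T2Space X] [MeasurableSpace X] [BorelSpace X]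
  {Y : Type*} [TopologicalSpace Y] [CompactSpace Y] [T2Space Y] [MeasurableSpace Y] [BorelSpace Y]

lemma aux_integrable (μ : Measure X) [IsFiniteMeasure μ] [μ.Regular] (f : C(X, ℝ)) : Integrable f μ :=
  f.continuous.integrable_of_hasCompactSupport (HasCompactSupport.of_compactSpace _)

lemma aux_ext (μ ν : Measure X) [IsFiniteMeasure μ] [IsFiniteMeasure ν] [μ.Regular] [ν.Regular]
    (h : ∀ f : C(X, ℝ), ∫ x, f x ∂μ = ∫ x, f x ∂ν) : μ = ν :=
  Measure.ext_of_integral_eq_on_compactlySupported (fun f => h f.toContinuousMap)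

lemma aux_riesz (Λ : C(X, ℝ) →ₗ[ℝ] ℝ) (h : ∀ f, 0 ≤ f → 0 ≤ Λ f) :
    ∃ μ : Measure X, IsFiniteMeasure μ ∧ μ.Regular ∧ ∀ f : C(X, ℝ), ∫ x, f x ∂μ = Λ f := by
  let Λ' : CompactlySupportedContinuousMap X ℝ →ₗ[ℝ] ℝ :=
    { toFun := fun f => Λ f.toContinuousMap
      map_add' := fun f g => by rw [← map_add]; rfl
      map_smul' := fun c f => by rw [RingHom.id_apply, ← map_smul]; rfl }
  let Λ'' := PositiveLinearMap.mk₀ Λ' (fun f hf => h _ hf)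
  refine ⟨RealRMK.rieszMeasure Λ'', inferInstance, inferInstance, fun f => ?_⟩
  exact RealRMK.integral_rieszMeasure Λ'' (CompactlySupportedContinuousMap.continuousMapEquiv f)

lemma aux_map (μ : Measure X) [IsFiniteMeasure μ] [μ.Regular] (f : X → Y) (hf : Continuous f) :
    (μ.map f).Regular := by
  have := Measure.InnerRegularCompactLTTop.map_of_continuous (μ := μ) hf
  infer_instance

lemma aux_add (μ ν : Measure X) [IsFiniteMeasure μ] [IsFiniteMeasure ν] [μ.Regular] [ν.Regular] :
    (μ + ν).Regular := by
  infer_instance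

lemma aux_le (μ ν : Measure X) [IsFiniteMeasure ν] [ν.Regular] (h : μ ≤ ν) : μ.Regular := by
  have : IsFiniteMeasure μ := isFiniteMeasure_of_le ν h
  have : μ.InnerRegular := by
    constructor
    intro s hs r hr
    have hne : μ s ≠ ⊤ := measure_ne_top _ _
    have hpos : μ s - r ≠ 0 := (tsub_pos_of_lt hr).ne'
    obtain ⟨K, hKs, hK, hlt⟩ := hs.exists_isCompact_sdiff_lt (μ := ν) (measure_ne_top _ _) hpos
    refine ⟨K, hKs, hK, ?_⟩
    have h1 : μ (s \ K) < μ s - r := lt_of_le_of_lt (h _) hlt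
    have h2 : μ s ≤ μ K + μ (s \ K) := by
      rw [← measure_sdiff_add_inter s hK.measurableSet, add_comm]
      gcongr
      exact Set.inter_subset_right
    by_contra! hc
    have h3 : μ K + μ (s \ K) < r + (μ s - r) :=
      ENNReal.add_lt_add_of_le_of_lt (measure_ne_top _ _) hc h1
    rw [add_tsub_cancel_of_le hr.le] at h3
    exact absurd h2 (not_le.2 h3)
  infer_instance

lemma aux_tv (μ ν : Measure X) [IsFiniteMeasure μ] [IsFiniteMeasure ν] [μ.Regular] [ν.Regular] :
    (μ.toSignedMeasure - ν.toSignedMeasure).totalVariation.Regular := by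
  apply aux_le _ (μ + ν)
  rw [SignedMeasure.totalVariation, Measure.toJordanDecomposition_toSignedMeasure_sub]
  exact add_le_add Measure.sub_le Measure.sub_le

lemma aux_decomp (s : SignedMeasure X) (hs : s.totalVariation.Regular) :
    ∃ (μ ν : Measure X) (_ : IsFiniteMeasure μ) (_ : IsFiniteMeasure ν), μ.Regular ∧ ν.Regular ∧ 
      s = μ.toSignedMeasure - ν.toSignedMeasure := by
  have : IsFiniteMeasure s.totalVariation := by
    unfold SignedMeasure.totalVariation; infer_instance
  refine ⟨s.toJordanDecomposition.posPart, s.toJordanDecomposition.negPart, inferInstance,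
    inferInstance, aux_le _ s.totalVariation ?_, aux_le _ s.totalVariation ?_, ?_⟩
  · exact Measure.le_add_right le_rfl
  · exact Measure.le_add_left le_rfl
  · exact s.toSignedMeasure_toJordanDecomposition.symm

lemma aux_eq_iff (a b c d : Measure X) [IsFiniteMeasure a] [IsFiniteMeasure b] [IsFiniteMeasure c]
    [IsFiniteMeasure d] : a.toSignedMeasure - b.toSignedMeasure =
      c.toSignedMeasure - d.toSignedMeasure ↔ a + d = c + b := by
  rw [sub_eq_sub_iff_add_eq_add, ← Measure.toSignedMeasure_add, ← Measure.toSignedMeasure_add,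
    Measure.toSignedMeasure_eq_toSignedMeasure_iff]

lemma aux_smap (a b : Measure X) [IsFiniteMeasure a] [IsFiniteMeasure b] (f : X → Y)
    (hf : Continuous f) : (a.toSignedMeasure - b.toSignedMeasure).map f =
      (a.map f).toSignedMeasure - (b.map f).toSignedMeasure := by
  ext i hi
  rw [VectorMeasure.map_apply _ hf.measurable hi]
  simp [hi, hf.measurable hi, measureReal_def,
    Measure.map_apply hf.measurable hi]

lemma aux_re (μ : ComplexMeasure X) (f : X → Y) (hf : Continuous f) :
    ComplexMeasure.re (μ.map f) = (ComplexMeasure.re μ).map f := by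
  ext i hi
  rw [VectorMeasure.map_apply _ hf.measurable hi]
  change (μ.map f i).re = (μ (f ⁻¹' i)).re
  rw [VectorMeasure.map_apply _ hf.measurable hi]

lemma aux_im (μ : ComplexMeasure X) (f : X → Y) (hf : Continuous f) :
    ComplexMeasure.im (μ.map f) = (ComplexMeasure.im μ).map f := by
  ext i hi
  rw [VectorMeasure.map_apply _ hf.measurable hi]
  change (μ.map f i).im = (μ (f ⁻¹' i)).im
  rw [VectorMeasure.map_apply _ hf.measurable hi]


lemma aux_cext (μ ν : ComplexMeasure X) (h : ComplexMeasure.re μ = ComplexMeasure.re ν)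
    (h' : ComplexMeasure.im μ = ComplexMeasure.im ν) : μ = ν := by
  rw [← μ.toComplexMeasure_to_signedMeasure, h, h', ν.toComplexMeasure_to_signedMeasure]
end aux

section dyn
open Topology
variable {K L : Type*} [TopologicalSpace K] [CompactSpace K] [T2Space K]
    [MeasurableSpace K] [BorelSpace K]
    [TopologicalSpace L] [CompactSpace L] [T2Space L]
    [MeasurableSpace L] [BorelSpace L]

lemma dyn_inv (φ : K → K) (q : K → L) (hq : Continuous q)
    (hmax : ∀ f : C(K, ℂ), (∀ x, f (φ x) = f x) ↔ ∃ g : C(L, ℂ), f = g.comp ⟨q, hq⟩)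
    (g : C(L, ℝ)) (x : K) : g (q (φ x)) = g (q x) := by
  let G : C(L, ℂ) := ⟨fun y => (g y : ℂ), by fun_prop⟩
  have := (hmax (G.comp ⟨q, hq⟩)).2 ⟨G, rfl⟩ x
  exact Complex.ofReal_injective this

lemma dyn_avg_inv (φ : K → K) (q : K → L) (hq : Continuous q)
    (hmax : ∀ f : C(K, ℂ), (∀ x, f (φ x) = f x) ↔ ∃ g : C(L, ℂ), f = g.comp ⟨q, hq⟩)
    (g : C(L, ℝ)) (n : ℕ) (hn : n ≠ 0) (x : K) :
    birkhoffAverage ℝ φ (fun x => g (q x)) n x = g (q x) := by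
  have h : (fun x => g (q x)) ∘ φ = fun x => g (q x) :=
    funext fun x => dyn_inv φ q hq hmax g x
  rw [birkhoffAverage_of_comp_eq ℝ h (by exact_mod_cast hn)]

lemma dyn_bound (φ : K → K) (f : C(K, ℝ)) (n : ℕ) (x : K) :
    |birkhoffAverage ℝ φ f n x| ≤ ‖f‖ := by
  unfold birkhoffAverage birkhoffSum
  rw [smul_eq_mul, abs_mul, abs_inv, Nat.abs_cast]
  rcases Nat.eq_zero_or_pos n with rfl | hn
  · simp
  have hn' : (0:ℝ) < n := by exact_mod_cast hn
  rw [inv_mul_le_iff₀ hn']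
  refine (Finset.abs_sum_le_sum_abs _ _).trans ?_
  refine (Finset.sum_le_sum (fun k _ => f.norm_coe_le_norm (φ^[k] x))).trans ?_
  simp

lemma dyn_comp (φ : K → K) (f : C(K, ℝ)) (n : ℕ) (x : K) :
    birkhoffAverage ℝ φ (fun x => f (φ x)) n x = birkhoffAverage ℝ φ f n (φ x) := by
  unfold birkhoffAverage birkhoffSum
  congr 1
  refine Finset.sum_congr rfl fun k _ => ?_
  rw [← Function.iterate_succ_apply, Function.iterate_succ_apply']

lemma dyn_shift (φ : K → K) (f : C(K, ℝ)) (n : ℕ) (x : K) :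
    |birkhoffAverage ℝ φ (fun x => f (φ x)) n x - birkhoffAverage ℝ φ f n x| ≤
      (n : ℝ)⁻¹ * (2 * ‖f‖) := by
  rw [dyn_comp, birkhoffAverage_apply_sub_birkhoffAverage, smul_eq_mul, abs_mul, abs_inv, Nat.abs_cast]
  gcongr
  have := f.norm_coe_le_norm (φ^[n] x)
  have := f.norm_coe_le_norm x
  rw [two_mul]
  refine (abs_sub _ _).trans ?_
  exact add_le_add (f.norm_coe_le_norm _) (f.norm_coe_le_norm _)

lemma dyn_add (φ : K → K) (f g : C(K, ℝ)) (n : ℕ) (x : K) :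
    birkhoffAverage ℝ φ (f + g : C(K, ℝ)) n x =
      birkhoffAverage ℝ φ f n x + birkhoffAverage ℝ φ g n x := by
  simp [birkhoffAverage, birkhoffSum, Finset.sum_add_distrib, mul_add]

lemma dyn_smul (φ : K → K) (c : ℝ) (f : C(K, ℝ)) (n : ℕ) (x : K) :
    birkhoffAverage ℝ φ (c • f : C(K, ℝ)) n x = c * birkhoffAverage ℝ φ f n x := by
  simp only [birkhoffAverage, birkhoffSum, ContinuousMap.coe_smul, Pi.smul_apply, smul_eq_mul,
    ← Finset.mul_sum]
  ring

lemma dyn_nonneg (φ : K → K) (f : C(K, ℝ)) (hf : 0 ≤ f) (n : ℕ) (x : K) :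
    0 ≤ birkhoffAverage ℝ φ f n x := by
  unfold birkhoffAverage birkhoffSum
  rw [smul_eq_mul]
  exact mul_nonneg (by positivity) (Finset.sum_nonneg fun k _ => hf _)

/-- Weak limits of averages along an ultrafilter are given by invariant measures. -/
lemma dyn_limit (φ : K → K) (hφ : Continuous φ) (m : ℕ → ℕ) (hm : ∀ N, N ≤ m N) (x : ℕ → K) :
    ∃ μ : Measure K, ∃ _ : IsFiniteMeasure μ, μ.Regular ∧ μ.map φ = μ ∧
      ∀ f : C(K, ℝ), Tendsto (fun N => birkhoffAverage ℝ φ f (m N) (x N))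
        (hyperfilter ℕ : Filter ℕ) (𝓝 (∫ y, f y ∂μ)) := by
  have hex : ∀ f : C(K, ℝ), ∃ y, Tendsto (fun N => birkhoffAverage ℝ φ f (m N) (x N))
      (hyperfilter ℕ : Filter ℕ) (𝓝 y) := by
    intro f
    obtain ⟨y, -, hy⟩ := (isCompact_Icc (a := -‖f‖) (b := ‖f‖)).ultrafilter_le_nhds
      ((hyperfilter ℕ).map (fun N => birkhoffAverage ℝ φ f (m N) (x N))) (by
        rw [Ultrafilter.coe_map, le_principal_iff, Filter.mem_map]
        exact Filter.mem_of_superset univ_mem (fun N _ => abs_le.1 (dyn_bound φ f _ _)))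
    exact ⟨y, hy⟩
  choose Λ hΛ using hex
  let Λ' : C(K, ℝ) →ₗ[ℝ] ℝ :=
    { toFun := Λ
      map_add' := fun f g => tendsto_nhds_unique (hΛ (f + g)) (by
        simpa only [dyn_add] using (hΛ f).add (hΛ g))
      map_smul' := fun c f => tendsto_nhds_unique (hΛ (c • f)) (by
        simpa only [dyn_smul, RingHom.id_apply, smul_eq_mul] using (hΛ f).const_mul c) }
  obtain ⟨μ, hfin, hreg, hμ⟩ := aux_riesz Λ' (fun f hf =>
    ge_of_tendsto' (hΛ f) (fun N => dyn_nonneg φ f hf _ _))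
  have hmt : Tendsto m (hyperfilter ℕ : Filter ℕ) atTop :=
    (tendsto_atTop_mono hm tendsto_id).mono_left Nat.hyperfilter_le_atTop
  refine ⟨μ, hfin, hreg, ?_, fun f => ?_⟩
  · have := aux_map μ φ hφ
    refine aux_ext _ _ fun f => ?_
    rw [integral_map hφ.aemeasurable f.continuous.aestronglyMeasurable]
    have h1 := hμ (f.comp ⟨φ, hφ⟩)
    have h2 := hμ f
    simp only [ContinuousMap.comp_apply, ContinuousMap.coe_mk] at h1
    rw [h1, h2]
    have h3 : Tendsto (fun N => ((m N : ℕ) : ℝ)⁻¹ * (2 * ‖f‖)) (hyperfilter ℕ : Filter ℕ)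
        (𝓝 (0 * (2 * ‖f‖))) :=
      ((tendsto_inv_atTop_zero.comp tendsto_natCast_atTop_atTop).comp hmt).mul_const _
    rw [zero_mul] at h3
    have h4 := squeeze_zero_norm (f := fun N => birkhoffAverage ℝ φ (fun x => f (φ x)) (m N) (x N) -
      birkhoffAverage ℝ φ f (m N) (x N)) (fun N => dyn_shift φ f (m N) (x N)) h3
    have h5 := (hΛ (f.comp ⟨φ, hφ⟩)).sub (hΛ f)
    exact sub_eq_zero.1 (tendsto_nhds_unique h5 h4)
  · rw [hμ f]; exact hΛ f

lemma dyn_back (φ : K → K) (hφ : Continuous φ) (q : K → L) (hq : Continuous q)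
    (hmax : ∀ f : C(K, ℂ), (∀ x, f (φ x) = f x) ↔ ∃ g : C(L, ℂ), f = g.comp ⟨q, hq⟩)
    (H : ∀ μ : ComplexMeasure K, IsRegularComplexMeasure μ → μ.map φ = μ → μ.map q = 0 → μ = 0)
    (f : C(K, ℝ)) : ∀ ε > 0, ∃ N, ∀ m ≥ N, ∀ n ≥ N, ∀ x,
      |birkhoffAverage ℝ φ f m x - birkhoffAverage ℝ φ f n x| < ε := by
  by_contra! hc
  obtain ⟨ε, hε, hc⟩ := hc
  choose m hm n hn x hx using hc
  obtain ⟨μ, _, hμr, hμi, hμ⟩ := dyn_limit φ hφ m hm x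
  obtain ⟨ν, _, hνr, hνi, hν⟩ := dyn_limit φ hφ n hn x
  have hqq : μ.map q = ν.map q := by
    have := aux_map μ q hq
    have := aux_map ν q hq
    refine aux_ext _ _ fun g => ?_
    rw [integral_map hq.aemeasurable g.continuous.aestronglyMeasurable,
      integral_map hq.aemeasurable g.continuous.aestronglyMeasurable]
    refine tendsto_nhds_unique (hμ (g.comp ⟨q, hq⟩)) ((hν (g.comp ⟨q, hq⟩)).congr' ?_)
    have h1 : ∀ᶠ N in (hyperfilter ℕ : Filter ℕ), 1 ≤ N :=
      Nat.hyperfilter_le_atTop (eventually_ge_atTop 1)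
    filter_upwards [h1] with N hN
    have e1 := dyn_avg_inv φ q hq hmax g (m N) (by have := hm N; omega) (x N)
    have e2 := dyn_avg_inv φ q hq hmax g (n N) (by have := hn N; omega) (x N)
    exact e2.trans e1.symm
  have h0 := H ((μ.toSignedMeasure - ν.toSignedMeasure).toComplexMeasure 0)
    ⟨by rw [SignedMeasure.re_toComplexMeasure]; exact aux_tv μ ν,
      by rw [SignedMeasure.im_toComplexMeasure, SignedMeasure.totalVariation_zero]; infer_instance⟩
    (by
      apply aux_cext
      · rw [aux_re _ _ hφ, SignedMeasure.re_toComplexMeasure, aux_smap _ _ _ hφ]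
        simp only [hμi, hνi]
      · rw [aux_im _ _ hφ, SignedMeasure.im_toComplexMeasure, VectorMeasure.map_zero])
    (by
      apply aux_cext
      · rw [aux_re _ _ hq, SignedMeasure.re_toComplexMeasure, aux_smap _ _ _ hq]
        simp only [hqq, sub_self, map_zero]
      · rw [aux_im _ _ hq, SignedMeasure.im_toComplexMeasure, VectorMeasure.map_zero, map_zero])
  have h1 : μ.toSignedMeasure - ν.toSignedMeasure = 0 := by
    have := congrArg ComplexMeasure.re h0
    rwa [SignedMeasure.re_toComplexMeasure, map_zero] at this
  have h2 : μ = ν := Measure.toSignedMeasure_eq_toSignedMeasure_iff.1 (sub_eq_zero.1 h1)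
  subst h2
  have h3 := ((hμ f).sub (hν f)).abs
  rw [sub_self, abs_zero] at h3
  have := ge_of_tendsto' h3 hx
  linarith

lemma dyn_backward (φ : K → K) (hφ : Continuous φ) (q : K → L) (hq : Continuous q)
    (hmax : ∀ f : C(K, ℂ), (∀ x, f (φ x) = f x) ↔ ∃ g : C(L, ℂ), f = g.comp ⟨q, hq⟩)
    (H : ∀ μ : ComplexMeasure K, IsRegularComplexMeasure μ → μ.map φ = μ → μ.map q = 0 → μ = 0) :
    MeanErgodic φ := by
  intro f
  let fr : C(K, ℝ) := ⟨fun x => (f x).re, by fun_prop⟩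
  let fi : C(K, ℝ) := ⟨fun x => (f x).im, by fun_prop⟩
  let F : ℕ → K → ℂ := fun n x => (n : ℂ)⁻¹ • ∑ k ∈ Finset.range n, f (φ^[k] x)
  have hre : ∀ n x, (F n x).re = birkhoffAverage ℝ φ fr n x := by
    intro n x
    have : ((n : ℂ)⁻¹) = (((n : ℝ)⁻¹ : ℝ) : ℂ) := by push_cast; rfl
    simp only [F, birkhoffAverage, birkhoffSum, fr, smul_eq_mul, this, Complex.re_ofReal_mul,
      Complex.re_sum, ContinuousMap.coe_mk]
  have him : ∀ n x, (F n x).im = birkhoffAverage ℝ φ fi n x := by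
    intro n x
    have : ((n : ℂ)⁻¹) = (((n : ℝ)⁻¹ : ℝ) : ℂ) := by push_cast; rfl
    simp only [F, birkhoffAverage, birkhoffSum, fi, smul_eq_mul, this, Complex.im_ofReal_mul,
      Complex.im_sum, ContinuousMap.coe_mk]
  have hC : UniformCauchySeqOn F atTop Set.univ := by
    rw [Metric.uniformCauchySeqOn_iff]
    intro ε hε
    obtain ⟨N1, h1⟩ := dyn_back φ hφ q hq hmax H fr (ε / 2) (by positivity)
    obtain ⟨N2, h2⟩ := dyn_back φ hφ q hq hmax H fi (ε / 2) (by positivity)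
    refine ⟨max N1 N2, fun m hm n hn x _ => ?_⟩
    have a1 := h1 m (le_trans (le_max_left _ _) hm) n (le_trans (le_max_left _ _) hn) x
    have a2 := h2 m (le_trans (le_max_right _ _) hm) n (le_trans (le_max_right _ _) hn) x
    rw [dist_eq_norm]
    refine (Complex.norm_le_abs_re_add_abs_im _).trans_lt ?_
    rw [Complex.sub_re, Complex.sub_im, hre, hre, him, him]
    linarith
  have hp : ∀ x, ∃ y, Tendsto (fun n => F n x) atTop (𝓝 y) := fun x =>
    cauchySeq_tendsto_of_complete (hC.cauchySeq (Set.mem_univ x))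
  choose g hg using hp
  exact ⟨g, tendstoUniformlyOn_univ.1 (hC.tendstoUniformlyOn_of_tendsto fun x _ => hg x)⟩

lemma fwd_lim (φ : K → K) (hφ : Continuous φ) (q : K → L) (hq : Continuous q)
    (hmax : ∀ f : C(K, ℂ), (∀ x, f (φ x) = f x) ↔ ∃ g : C(L, ℂ), f = g.comp ⟨q, hq⟩)
    (H : MeanErgodic φ) (f : C(K, ℝ)) : ∃ h : C(L, ℝ), ∀ x,
      Tendsto (fun n => birkhoffAverage ℝ φ f n x) atTop (𝓝 (h (q x))) := by
  let F : C(K, ℂ) := ⟨fun x => (f x : ℂ), by fun_prop⟩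
  obtain ⟨g, hg⟩ := H F
  have hgc : Continuous g := hg.continuous (Frequently.of_forall fun n => by
    have : ∀ k, Continuous φ^[k] := fun k => hφ.iterate k
    have h2 : Continuous fun x => ∑ k ∈ Finset.range n, F (φ^[k] x) :=
      continuous_finsetSum _ fun k _ => F.continuous.comp (this k)
    exact h2.const_smul ((n : ℂ)⁻¹))
  have hF : ∀ (n : ℕ) x, (n : ℂ)⁻¹ • ∑ k ∈ Finset.range n, F (φ^[k] x) =
      ((birkhoffAverage ℝ φ f n x : ℝ) : ℂ) := by
    intro n x
    simp [F, birkhoffAverage, birkhoffSum]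
  have hlim : ∀ x, Tendsto (fun n => birkhoffAverage ℝ φ f n x) atTop (𝓝 (g x).re) := by
    intro x
    have h1 := hg.tendsto_at x
    simp only [hF] at h1
    exact (Complex.continuous_re.tendsto _).comp h1
  have hlim' : ∀ x, Tendsto (fun n => ((birkhoffAverage ℝ φ f n x : ℝ) : ℂ)) atTop (𝓝 (g x)) := by
    intro x
    have h1 := hg.tendsto_at x
    simpa only [hF] using h1
  have hinv : ∀ x, g (φ x) = g x := by
    intro x
    have h3 : Tendsto (fun n : ℕ => (n : ℝ)⁻¹ * (2 * ‖f‖)) atTop (𝓝 (0 * (2 * ‖f‖))) :=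
      (tendsto_inv_atTop_zero.comp tendsto_natCast_atTop_atTop).mul_const _
    rw [zero_mul] at h3
    have h4 := squeeze_zero_norm (f := fun n => birkhoffAverage ℝ φ (fun x => f (φ x)) n x -
      birkhoffAverage ℝ φ f n x) (fun n => dyn_shift φ f n x) h3
    have h5 : Tendsto (fun n => ((birkhoffAverage ℝ φ (fun x => f (φ x)) n x -
      birkhoffAverage ℝ φ f n x : ℝ) : ℂ)) atTop (𝓝 ((0 : ℝ) : ℂ)) :=
      (Complex.continuous_ofReal.tendsto _).comp h4
    have h6 := (hlim' (φ x)).sub (hlim' x)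
    refine sub_eq_zero.1 (tendsto_nhds_unique h6 ?_)
    rw [Complex.ofReal_zero] at h5
    refine h5.congr fun n => ?_
    rw [dyn_comp, Complex.ofReal_sub]
  obtain ⟨h, hh⟩ := (hmax ⟨g, hgc⟩).1 hinv
  refine ⟨⟨fun y => (h y).re, by fun_prop⟩, fun x => ?_⟩
  have : g x = h (q x) := congrArg (fun u : C(K, ℂ) => u x) hh
  have h7 := hlim x
  rw [this] at h7
  exact h7

/-- Existence for positive measures. -/
lemma fwd_exists (φ : K → K) (hφ : Continuous φ) (q : K → L) (hq : Continuous q)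
    (hqsurj : Function.Surjective q)
    (hmax : ∀ f : C(K, ℂ), (∀ x, f (φ x) = f x) ↔ ∃ g : C(L, ℂ), f = g.comp ⟨q, hq⟩)
    (H : MeanErgodic φ) (ν : Measure L) [IsFiniteMeasure ν] [ν.Regular] :
    ∃ μ : Measure K, ∃ _ : IsFiniteMeasure μ, μ.Regular ∧ μ.map φ = μ ∧ μ.map q = ν := by
  choose E hE using fwd_lim φ hφ q hq hmax H
  have hu : ∀ (f : C(K, ℝ)) (h : C(L, ℝ)), (∀ x,
      Tendsto (fun n => birkhoffAverage ℝ φ f n x) atTop (𝓝 (h (q x)))) → E f = h := by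
    intro f h hh
    ext y
    obtain ⟨x, rfl⟩ := hqsurj y
    exact tendsto_nhds_unique (hE f x) (hh x)
  have hadd : ∀ f g, E (f + g) = E f + E g := fun f g => hu _ _ fun x => by
    simpa only [dyn_add, ContinuousMap.add_apply] using (hE f x).add (hE g x)
  have hsmul : ∀ (c : ℝ) f, E (c • f) = c • E f := fun c f => hu _ _ fun x => by
    simpa only [dyn_smul, ContinuousMap.smul_apply, smul_eq_mul] using (hE f x).const_mul c
  have hqE : ∀ g : C(L, ℝ), E (g.comp ⟨q, hq⟩) = g := fun g => hu _ _ fun x => by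
    refine tendsto_const_nhds.congr' ?_
    filter_upwards [eventually_ge_atTop 1] with n hn
    exact (dyn_avg_inv φ q hq hmax g n (by omega) x).symm
  have hφE : ∀ f : C(K, ℝ), E (f.comp ⟨φ, hφ⟩) = E f := fun f => hu _ _ fun x => by
    have h1 := hE f (φ x)
    rw [dyn_inv φ q hq hmax (E f) x] at h1
    refine h1.congr fun n => ?_
    rw [← dyn_comp]
    rfl
  let Λ : C(K, ℝ) →ₗ[ℝ] ℝ :=
    { toFun := fun f => ∫ y, E f y ∂ν
      map_add' := fun f g => by
        rw [hadd, ← integral_add (aux_integrable ν _) (aux_integrable ν _)]; rfl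
      map_smul' := fun c f => by
        rw [hsmul, RingHom.id_apply, smul_eq_mul, ← integral_const_mul]; rfl }
  obtain ⟨μ, hfin, hreg, hμ⟩ := aux_riesz Λ (fun f hf => integral_nonneg fun y => by
    obtain ⟨x, rfl⟩ := hqsurj y
    exact ge_of_tendsto' (hE f x) fun n => dyn_nonneg φ f hf n x)
  refine ⟨μ, hfin, hreg, ?_, ?_⟩
  · have := aux_map μ φ hφ
    refine aux_ext _ _ fun f => ?_
    rw [integral_map hφ.aemeasurable f.continuous.aestronglyMeasurable, hμ f]
    refine (hμ (f.comp ⟨φ, hφ⟩)).trans ?_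
    change ∫ y, E _ y ∂ν = ∫ y, E _ y ∂ν
    rw [hφE]
  · have := aux_map μ q hq
    refine aux_ext _ _ fun g => ?_
    rw [integral_map hq.aemeasurable g.continuous.aestronglyMeasurable]
    refine (hμ (g.comp ⟨q, hq⟩)).trans ?_
    change ∫ y, E _ y ∂ν = _
    rw [hqE]

lemma fwd_integral (φ : K → K) (hφ : Continuous φ) (q : K → L) (hq : Continuous q)
    (a b : Measure K) [IsFiniteMeasure a] [IsFiniteMeasure b] [a.Regular] [b.Regular]
    (hab : a.map φ + b = a + b.map φ) (f : C(K, ℝ)) (h : C(L, ℝ))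
    (hh : ∀ x, Tendsto (fun n => birkhoffAverage ℝ φ f n x) atTop (𝓝 (h (q x)))) :
    ∫ x, f x ∂a - ∫ x, f x ∂b = ∫ y, h y ∂(a.map q) - ∫ y, h y ∂(b.map q) := by
  have := aux_map a φ hφ
  have := aux_map b φ hφ
  have step : ∀ g : C(K, ℝ), ∫ x, g (φ x) ∂a - ∫ x, g (φ x) ∂b = ∫ x, g x ∂a - ∫ x, g x ∂b := by
    intro g
    have h1 := congrArg (fun m : Measure K => ∫ x, g x ∂m) hab
    rw [integral_add_measure (aux_integrable _ g) (aux_integrable _ g),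
      integral_add_measure (aux_integrable _ g) (aux_integrable _ g),
      integral_map hφ.aemeasurable g.continuous.aestronglyMeasurable,
      integral_map hφ.aemeasurable g.continuous.aestronglyMeasurable] at h1
    linarith
  have hit : ∀ k, ∫ x, f (φ^[k] x) ∂a - ∫ x, f (φ^[k] x) ∂b = ∫ x, f x ∂a - ∫ x, f x ∂b := by
    intro k
    induction k with
    | zero => rfl
    | succ k ih =>
      rw [← ih]
      exact step (f.comp ⟨φ^[k], hφ.iterate k⟩)
  have hint : ∀ (m : Measure K) [IsFiniteMeasure m] [m.Regular] (k : ℕ),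
      Integrable (fun x => f (φ^[k] x)) m := fun m _ _ k =>
    aux_integrable m (f.comp ⟨φ^[k], hφ.iterate k⟩)
  have havg : ∀ n : ℕ, n ≠ 0 → ∫ x, birkhoffAverage ℝ φ f n x ∂a -
      ∫ x, birkhoffAverage ℝ φ f n x ∂b = ∫ x, f x ∂a - ∫ x, f x ∂b := by
    intro n hn
    have hn' : (n : ℝ) ≠ 0 := by exact_mod_cast hn
    simp only [birkhoffAverage, birkhoffSum, smul_eq_mul, integral_const_mul]
    rw [integral_finsetSum _ fun k _ => hint a k, integral_finsetSum _ fun k _ => hint b k,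
      ← mul_sub, ← Finset.sum_sub_distrib, Finset.sum_congr rfl fun k _ => hit k,
      Finset.sum_const, Finset.card_range, nsmul_eq_mul, inv_mul_cancel_left₀ hn']
  have hlim : ∀ (m : Measure K) [IsFiniteMeasure m] [m.Regular],
      Tendsto (fun n => ∫ x, birkhoffAverage ℝ φ f n x ∂m) atTop (𝓝 (∫ y, h y ∂(m.map q))) := by
    intro m _ _
    rw [integral_map hq.aemeasurable h.continuous.aestronglyMeasurable]
    refine tendsto_integral_of_dominated_convergence (fun _ => ‖f‖) (fun n => ?_)
      (integrable_const _) (fun n => ae_of_all _ fun x => dyn_bound φ f n x)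
      (ae_of_all _ hh)
    change AEStronglyMeasurable (fun x => (n : ℝ)⁻¹ * ∑ k ∈ Finset.range n, f (φ^[k] x)) m
    exact ((integrable_finsetSum _ fun k _ => hint m k).const_mul _).aestronglyMeasurable
  refine tendsto_nhds_unique ?_ ((hlim a).sub (hlim b))
  refine tendsto_const_nhds.congr' ?_
  filter_upwards [eventually_ge_atTop 1] with n hn
  exact (havg n (by omega)).symm

lemma fwd_signed (φ : K → K) (hφ : Continuous φ) (q : K → L) (hq : Continuous q)
    (hqsurj : Function.Surjective q)
    (hmax : ∀ f : C(K, ℂ), (∀ x, f (φ x) = f x) ↔ ∃ g : C(L, ℂ), f = g.comp ⟨q, hq⟩)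
    (H : MeanErgodic φ) (ν : SignedMeasure L) (hν : ν.totalVariation.Regular) :
    ∃ s : SignedMeasure K, s.totalVariation.Regular ∧ s.map φ = s ∧ s.map q = ν := by
  obtain ⟨a, b, _, _, _, _, rfl⟩ := aux_decomp ν hν
  obtain ⟨c, _, _, hc, hc'⟩ := fwd_exists φ hφ q hq hqsurj hmax H a
  obtain ⟨d, _, _, hd, hd'⟩ := fwd_exists φ hφ q hq hqsurj hmax H b
  refine ⟨c.toSignedMeasure - d.toSignedMeasure, aux_tv c d, ?_, ?_⟩
  · rw [aux_smap _ _ _ hφ]; simp only [hc, hd]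
  · rw [aux_smap _ _ _ hq]; simp only [hc', hd']

lemma fwd_unique (φ : K → K) (hφ : Continuous φ) (q : K → L) (hq : Continuous q)
    (hmax : ∀ f : C(K, ℂ), (∀ x, f (φ x) = f x) ↔ ∃ g : C(L, ℂ), f = g.comp ⟨q, hq⟩)
    (H : MeanErgodic φ) (s t : SignedMeasure K) (hs : s.totalVariation.Regular)
    (ht : t.totalVariation.Regular) (hsi : s.map φ = s) (hti : t.map φ = t)
    (hst : s.map q = t.map q) : s = t := by
  obtain ⟨a, b, _, _, _, _, rfl⟩ := aux_decomp s hs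
  obtain ⟨c, d, _, _, _, _, rfl⟩ := aux_decomp t ht
  rw [aux_smap _ _ _ hφ, aux_eq_iff] at hsi hti
  rw [aux_smap _ _ _ hq, aux_smap _ _ _ hq, aux_eq_iff] at hst
  rw [aux_eq_iff]
  have := aux_add a d
  have := aux_add c b
  refine aux_ext _ _ fun f => ?_
  obtain ⟨h, hh⟩ := fwd_lim φ hφ q hq hmax H f
  have e1 := fwd_integral φ hφ q hq a b hsi f h hh
  have e2 := fwd_integral φ hφ q hq c d hti f h hh
  have := aux_map a q hq
  have := aux_map b q hq
  have := aux_map c q hq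
  have := aux_map d q hq
  have e3 := congrArg (fun m : Measure L => ∫ x, h x ∂m) hst
  rw [integral_add_measure (aux_integrable _ h) (aux_integrable _ h),
    integral_add_measure (aux_integrable _ h) (aux_integrable _ h)] at e3
  rw [integral_add_measure (aux_integrable _ f) (aux_integrable _ f),
    integral_add_measure (aux_integrable _ f) (aux_integrable _ f)]
  linarith

end dyn

/-- Let `(K, φ)` be a topological dynamical system and `q : K → L` a
projection onto its maximal trivial factor.  Then the Koopman operator `T_φ` is mean ergodic
on `C(K)` if and only if the pushforward map `μ ↦ q_* μ` is a (linear) bijection from the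
space `M_φ(K)` of `φ`-invariant regular complex Borel measures on `K` onto the space `M(L)`
of all regular complex Borel measures on `L`; since the pushforward of a regular measure is
regular and the map is automatically linear, this is expressed by the unique-preimage
property below. -/
theorem meanErgodic_iff_pushforward_bijective
    {K L : Type*} [TopologicalSpace K] [CompactSpace K] [T2Space K]
    [MeasurableSpace K] [BorelSpace K]
    [TopologicalSpace L] [CompactSpace L] [T2Space L]
    [MeasurableSpace L] [BorelSpace L]
    (φ : K → K) (hφ : Continuous φ)
    (q : K → L) (hq : Continuous q) (hqsurj : Function.Surjective q)
    (hmax : ∀ f : C(K, ℂ), (∀ x, f (φ x) = f x) ↔ ∃ g : C(L, ℂ), f = g.comp ⟨q, hq⟩) :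
    MeanErgodic φ ↔
      ∀ ν : ComplexMeasure L, IsRegularComplexMeasure ν →
        ∃! μ : ComplexMeasure K,
          (IsRegularComplexMeasure μ ∧ μ.map φ = μ) ∧ μ.map q = ν := by
  constructor
  · intro H ν hν
    obtain ⟨s, hs, hs1, hs2⟩ := fwd_signed φ hφ q hq hqsurj hmax H _ hν.1
    obtain ⟨t, ht, ht1, ht2⟩ := fwd_signed φ hφ q hq hqsurj hmax H _ hν.2
    refine ⟨s.toComplexMeasure t, ⟨⟨⟨hs, ht⟩, ?_⟩, ?_⟩, ?_⟩
    · apply aux_cext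
      · rw [aux_re _ _ hφ, SignedMeasure.re_toComplexMeasure, hs1]
      · rw [aux_im _ _ hφ, SignedMeasure.im_toComplexMeasure, ht1]
    · apply aux_cext
      · rw [aux_re _ _ hq, SignedMeasure.re_toComplexMeasure, hs2]
      · rw [aux_im _ _ hq, SignedMeasure.im_toComplexMeasure, ht2]
    · rintro μ ⟨⟨hμr, hμi⟩, hμq⟩
      apply aux_cext
      · rw [SignedMeasure.re_toComplexMeasure]
        refine fwd_unique φ hφ q hq hmax H _ _ hμr.1 hs ?_ hs1 ?_
        · rw [← aux_re _ _ hφ, hμi]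
        · rw [← aux_re _ _ hq, hμq, hs2]
      · rw [SignedMeasure.im_toComplexMeasure]
        refine fwd_unique φ hφ q hq hmax H _ _ hμr.2 ht ?_ ht1 ?_
        · rw [← aux_im _ _ hφ, hμi]
        · rw [← aux_im _ _ hq, hμq, ht2]
  · intro H
    have hz : ∀ {X : Type _} [TopologicalSpace X] [MeasurableSpace X],
        IsRegularComplexMeasure (0 : ComplexMeasure X) := by
      intro X _ _
      constructor <;> rw [map_zero, SignedMeasure.totalVariation_zero] <;> infer_instance
    refine dyn_backward φ hφ q hq hmax fun μ h1 h2 h3 => ?_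
    have hzL : IsRegularComplexMeasure (0 : ComplexMeasure L) := by
      constructor <;> rw [map_zero, SignedMeasure.totalVariation_zero] <;> infer_instance
    exact (H 0 hzL).unique ⟨⟨h1, h2⟩, h3⟩
      ⟨⟨hz, VectorMeasure.map_zero _⟩, VectorMeasure.map_zero _⟩
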